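/- Let 𝒜 = {S_2, S_3, …} be the collection of closed squares in ℝ² where S_i has side length 1/i for i ≥ 2. Suppose that for every ε > 0 the collection 𝒜 can be packed into a rectangle of height 1 and area π²/6 − 1 + ε. Then there exists a packing of 𝒜 into a rectangle of dimensions 1 × (π²/6 − 1) such that the complement, within that rectangle, of the union of the packed squares has Lebesgue measure zero (i.e., 𝒜 tiles a rectangle of dimensions 1 × (π²/6 − 1)). -/

import Mathlib

/-!
The tiling is a limit of packings. A rigid motion moving a set that contains the origin into a
rectangle has its linear part in the compact group `O(2)` and its translation part in that rectangle,
so the packings into `rect (W + ε) 1`, `0 < ε ≤ 1`, form a subset of a compact, first-countable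
product over the index set, and some sequence of them with `ε → 0` converges index by index.
Containment in the rectangles is a closed condition and passes to the limit. So does disjointness of
interiors: a point `p` interior to two of the limit sets is pulled back into two open interiors, hence
it is also interior to the corresponding approximating sets, which have disjoint interiors. This is
`packsInto_rect_of_forall_pos`.

For the reciprocal squares the limit packing fills the rectangle up to a null set, because rigid
motions preserve area and the areas of the (disjoint, open) interiors of the squares add up to
`∑ i ≥ 2, 1 / i ^ 2 = π ^ 2 / 6 - 1`, the area of the rectangle.
-/

open Pointwise

noncomputable section

/-- The rigid motion `(θ, ξ)` acting on a point of `ℝⁿ`: `x ↦ ξ + θx`. -/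
def rmApply {n : ℕ} (θ : Matrix (Fin n) (Fin n) ℝ) (ξ : EuclideanSpace ℝ (Fin n))
    (x : EuclideanSpace ℝ (Fin n)) : EuclideanSpace ℝ (Fin n) :=
  ξ + (EuclideanSpace.equiv (Fin n) ℝ).symm (θ.mulVec (EuclideanSpace.equiv (Fin n) ℝ x))

/-- `(θ, ξ)` is a packing of the family `A` into the set `C`: each `θ i` is orthogonal,
each repositioned set `σᵢ(Aᵢ)` is contained in `C`, and the repositioned sets have
pairwise disjoint interiors. -/
def IsPacking {n : ℕ} {ι : Type*} (A : ι → Set (EuclideanSpace ℝ (Fin n)))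
    (θ : ι → Matrix (Fin n) (Fin n) ℝ) (ξ : ι → EuclideanSpace ℝ (Fin n))
    (C : Set (EuclideanSpace ℝ (Fin n))) : Prop :=
  (∀ i, θ i ∈ Matrix.orthogonalGroup (Fin n) ℝ) ∧
  (∀ i, rmApply (θ i) (ξ i) '' A i ⊆ C) ∧
  Pairwise fun i j =>
    interior (rmApply (θ i) (ξ i) '' A i) ∩ interior (rmApply (θ j) (ξ j) '' A j) = ∅

/-- There exists a packing of `A` into `C`. -/
def PacksInto {n : ℕ} {ι : Type*} (A : ι → Set (EuclideanSpace ℝ (Fin n)))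
    (C : Set (EuclideanSpace ℝ (Fin n))) : Prop :=
  ∃ θ ξ, IsPacking A θ ξ C

/-- The closed axis-aligned rectangle `[0, w] × [0, h]` in `ℝ²`. -/
def rect (w h : ℝ) : Set (EuclideanSpace ℝ (Fin 2)) :=
  {x | x 0 ∈ Set.Icc 0 w ∧ x 1 ∈ Set.Icc 0 h}

/-- The collection of squares of side lengths `1/2`, `1/3`, `1/4`, …: the `i`-th set
(for `i : ℕ`) is a closed square of side length `1/(i+2)`. -/
def reciprocalSquares : ℕ → Set (EuclideanSpace ℝ (Fin 2)) :=
  fun i => rect (1 / ((i : ℝ) + 2)) (1 / ((i : ℝ) + 2))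

open MeasureTheory Filter Topology

/-- The inverse of the rigid motion `rmApply θ ξ` (for orthogonal `θ`): `p ↦ θᵀ (p - ξ)`. It is
written without reference to orthogonality so that it depends continuously on `(θ, ξ)`. -/
def rmInv {n : ℕ} (θ : Matrix (Fin n) (Fin n) ℝ) (ξ p : EuclideanSpace ℝ (Fin n)) :
    EuclideanSpace ℝ (Fin n) :=
  (EuclideanSpace.equiv (Fin n) ℝ).symm
    ((star θ).mulVec (EuclideanSpace.equiv (Fin n) ℝ (-ξ + p)))

lemma exists_homeomorph_rmApply {n : ℕ} {θ : Matrix (Fin n) (Fin n) ℝ}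
    (hθ : θ ∈ Matrix.orthogonalGroup (Fin n) ℝ) (ξ : EuclideanSpace ℝ (Fin n)) :
    ∃ e : EuclideanSpace ℝ (Fin n) ≃ₜ EuclideanSpace ℝ (Fin n),
      ⇑e = rmApply θ ξ ∧ ⇑e.symm = rmInv θ ξ ∧ MeasurePreserving e := by
  let u : unitary (EuclideanSpace ℝ (Fin n) →L[ℝ] EuclideanSpace ℝ (Fin n)) :=
    ⟨Matrix.toEuclideanCLM (n := Fin n) (𝕜 := ℝ) θ, Unitary.map_mem _ hθ⟩
  let L := Unitary.linearIsometryEquiv u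
  refine ⟨L.toHomeomorph.trans (Homeomorph.addLeft ξ), rfl, ?_, ?_⟩
  · funext p
    change (star (Matrix.toEuclideanCLM (n := Fin n) (𝕜 := ℝ) θ)) (-ξ + p) = _
    rw [← map_star]
    rfl
  · exact (measurePreserving_add_left volume ξ).comp L.measurePreserving

lemma interior_rmApply_image {n : ℕ} {θ : Matrix (Fin n) (Fin n) ℝ}
    (hθ : θ ∈ Matrix.orthogonalGroup (Fin n) ℝ) (ξ : EuclideanSpace ℝ (Fin n))
    (S : Set (EuclideanSpace ℝ (Fin n))) :
    interior (rmApply θ ξ '' S) = rmInv θ ξ ⁻¹' interior S := by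
  obtain ⟨e, he, he', -⟩ := exists_homeomorph_rmApply hθ ξ
  rw [← he, ← he', ← e.image_interior, e.image_eq_preimage_symm]

lemma volume_interior_rmApply_image {n : ℕ} {θ : Matrix (Fin n) (Fin n) ℝ}
    (hθ : θ ∈ Matrix.orthogonalGroup (Fin n) ℝ) (ξ : EuclideanSpace ℝ (Fin n))
    (S : Set (EuclideanSpace ℝ (Fin n))) :
    volume (interior (rmApply θ ξ '' S)) = volume (interior S) := by
  obtain ⟨e, he, he', hm⟩ := exists_homeomorph_rmApply hθ ξ
  rw [interior_rmApply_image hθ, ← he']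
  exact (hm.symm e.toMeasurableEquiv).measure_preimage
    isOpen_interior.measurableSet.nullMeasurableSet

lemma continuous_rmApply {n : ℕ} (x : EuclideanSpace ℝ (Fin n)) :
    Continuous fun q : Matrix (Fin n) (Fin n) ℝ × EuclideanSpace ℝ (Fin n) =>
      rmApply q.1 q.2 x := by
  unfold rmApply
  exact continuous_snd.add ((EuclideanSpace.equiv (Fin n) ℝ).symm.continuous.comp
    (continuous_fst.matrix_mulVec continuous_const))

lemma continuous_rmInv {n : ℕ} (p : EuclideanSpace ℝ (Fin n)) :
    Continuous fun q : Matrix (Fin n) (Fin n) ℝ × EuclideanSpace ℝ (Fin n) =>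
      rmInv q.1 q.2 p := by
  unfold rmInv
  exact (EuclideanSpace.equiv (Fin n) ℝ).symm.continuous.comp
    (continuous_fst.star.matrix_mulVec ((EuclideanSpace.equiv (Fin n) ℝ).continuous.comp
      (continuous_snd.neg.add continuous_const)))

/-- If rigid motions converge, an interior point of the limit image of a set is interior to all late
images; this is why disjointness of interiors survives in the limit. -/
lemma eventually_mem_interior_rmApply_image {n : ℕ} {S : Set (EuclideanSpace ℝ (Fin n))}
    {θ : ℕ → Matrix (Fin n) (Fin n) ℝ} {ξ : ℕ → EuclideanSpace ℝ (Fin n)}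
    {q : Matrix (Fin n) (Fin n) ℝ × EuclideanSpace ℝ (Fin n)}
    (hθ : ∀ k, θ k ∈ Matrix.orthogonalGroup (Fin n) ℝ)
    (hq : q.1 ∈ Matrix.orthogonalGroup (Fin n) ℝ)
    (hlim : Tendsto (fun k => (θ k, ξ k)) atTop (𝓝 q)) {p : EuclideanSpace ℝ (Fin n)}
    (hp : p ∈ interior (rmApply q.1 q.2 '' S)) :
    ∀ᶠ k in atTop, p ∈ interior (rmApply (θ k) (ξ k) '' S) := by
  rw [interior_rmApply_image hq, Set.mem_preimage] at hp
  have hc := (continuous_rmInv p).tendsto q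
  have ht : Tendsto (fun k => rmInv (θ k) (ξ k) p) atTop (𝓝 (rmInv q.1 q.2 p)) := by
    have hcomp := hc.comp hlim
    simpa only [Function.comp_def] using hcomp
  have hev := ht.eventually_mem (isOpen_interior.mem_nhds hp)
  refine hev.mono fun k hk => ?_
  rw [interior_rmApply_image (hθ k), Set.mem_preimage]
  exact hk

lemma isCompact_orthogonalGroup (n : ℕ) :
    IsCompact (Matrix.orthogonalGroup (Fin n) ℝ : Set (Matrix (Fin n) (Fin n) ℝ)) := by
  have hbox : IsCompact (Set.univ.pi fun _ : Fin n => Set.univ.pi fun _ : Fin n =>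
      Set.Icc (-1 : ℝ) 1) :=
    isCompact_univ_pi fun _ => isCompact_univ_pi fun _ => isCompact_Icc
  refine IsCompact.of_isClosed_subset (X := Matrix (Fin n) (Fin n) ℝ) hbox ?_ ?_
  · have : (Matrix.orthogonalGroup (Fin n) ℝ : Set (Matrix (Fin n) (Fin n) ℝ)) =
        {θ | θ * star θ = 1} := by
      ext θ
      exact Matrix.mem_orthogonalGroup_iff (Fin n) ℝ
    rw [this]
    exact isClosed_eq (continuous_id.matrix_mul continuous_id.star) continuous_const
  · intro θ hθ i _ j _
    exact abs_le.1 (entry_norm_bound_of_unitary hθ i j)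

lemma rect_eq_preimage (w h : ℝ) :
    rect w h = PiLp.homeomorph 2 (fun _ : Fin 2 => ℝ) ⁻¹'
      Set.univ.pi fun i => Set.Icc 0 (![w, h] i) := by
  ext x
  change _ ↔ ∀ i ∈ Set.univ, x i ∈ Set.Icc 0 (![w, h] i)
  simp [rect, Fin.forall_fin_two]

lemma isCompact_rect (w h : ℝ) : IsCompact (rect w h) := by
  rw [rect_eq_preimage, Homeomorph.isCompact_preimage]
  exact isCompact_univ_pi fun _ => isCompact_Icc

lemma volume_rect (w h : ℝ) : volume (rect w h) = ENNReal.ofReal w * ENNReal.ofReal h := by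
  rw [rect_eq_preimage]
  change volume (WithLp.ofLp ⁻¹' _) = _
  rw [(PiLp.volume_preserving_ofLp (Fin 2)).measure_preimage
    (MeasurableSet.univ_pi fun _ => measurableSet_Icc).nullMeasurableSet, volume_pi_pi]
  simp

lemma volume_interior_rect (w h : ℝ) :
    volume (interior (rect w h)) = ENNReal.ofReal w * ENNReal.ofReal h := by
  rw [rect_eq_preimage, ← Homeomorph.preimage_interior, interior_pi_set Set.finite_univ]
  change volume (WithLp.ofLp ⁻¹' _) = _
  rw [(PiLp.volume_preserving_ofLp (Fin 2)).measure_preimage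
    (MeasurableSet.univ_pi fun _ => isOpen_interior.measurableSet).nullMeasurableSet, volume_pi_pi]
  simp

/-- Compactness of the space of packings: packability into slightly wider rectangles of every
positive excess width implies packability into the limit rectangle. The sets contain the origin, so
that the translation parts of the rigid motions stay in a bounded rectangle. -/
lemma packsInto_rect_of_forall_pos {ι : Type*} [Countable ι]
    {A : ι → Set (EuclideanSpace ℝ (Fin 2))} (hA : ∀ i, 0 ∈ A i) (W H : ℝ)
    (h : ∀ ε : ℝ, 0 < ε → PacksInto A (rect (W + ε) H)) : PacksInto A (rect W H) := by
  choose θ ξ hP using fun k : ℕ => h (1 / ((k : ℝ) + 1)) (by positivity)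
  have : FirstCountableTopology (Matrix (Fin 2) (Fin 2) ℝ) :=
    inferInstanceAs (FirstCountableTopology (Fin 2 → Fin 2 → ℝ))
  have hK : IsCompact (Set.univ.pi fun _ : ι =>
      (Matrix.orthogonalGroup (Fin 2) ℝ : Set (Matrix (Fin 2) (Fin 2) ℝ)) ×ˢ rect (W + 1) H) :=
    isCompact_univ_pi fun _ => (isCompact_orthogonalGroup 2).prod (isCompact_rect _ _)
  have hmem : ∀ k, (fun i => (θ k i, ξ k i)) ∈ Set.univ.pi fun _ : ι =>
      (Matrix.orthogonalGroup (Fin 2) ℝ : Set (Matrix (Fin 2) (Fin 2) ℝ)) ×ˢ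
        rect (W + 1) H := by
    intro k i _
    refine ⟨(hP k).1 i, ?_⟩
    -- The translation part is the image of the origin.
    have h0 : ξ k i ∈ rect (W + 1 / ((k : ℝ) + 1)) H :=
      (hP k).2.1 i ⟨0, hA i, by simp [rmApply]⟩
    have hk : 1 / ((k : ℝ) + 1) ≤ 1 := by
      rw [div_le_one (by positivity)]
      linarith [k.cast_nonneg (α := ℝ)]
    exact ⟨⟨h0.1.1, h0.1.2.trans (by linarith)⟩, h0.2⟩
  obtain ⟨q, hq, φ, hφ, hlim⟩ := hK.tendsto_subseq hmem
  have hlim' : ∀ i, Tendsto (fun k => (θ (φ k) i, ξ (φ k) i)) atTop (𝓝 (q i)) :=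
    fun i => tendsto_pi_nhds.1 hlim i
  have horth : ∀ i, (q i).1 ∈ Matrix.orthogonalGroup (Fin 2) ℝ := fun i => (hq i trivial).1
  refine ⟨fun i => (q i).1, fun i => (q i).2, horth, ?_, ?_⟩
  · rintro i _ ⟨x, hx, rfl⟩
    have hx' : ∀ k, rmApply (θ (φ k) i) (ξ (φ k) i) x ∈ rect (W + 1 / ((φ k : ℝ) + 1)) H :=
      fun k => (hP (φ k)).2.1 i ⟨x, hx, rfl⟩
    have ht : Tendsto (fun k => rmApply (θ (φ k) i) (ξ (φ k) i) x) atTop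
        (𝓝 (rmApply (q i).1 (q i).2 x)) := ((continuous_rmApply x).tendsto (q i)).comp (hlim' i)
    have hc : ∀ j : Fin 2, Tendsto (fun k => rmApply (θ (φ k) i) (ξ (φ k) i) x j) atTop
        (𝓝 (rmApply (q i).1 (q i).2 x j)) := fun j =>
      ((EuclideanSpace.proj (𝕜 := ℝ) j).continuous.tendsto _).comp ht
    have hW : Tendsto (fun k => W + 1 / ((φ k : ℝ) + 1)) atTop (𝓝 W) := by
      simpa using ((tendsto_one_div_add_atTop_nhds_zero_nat (𝕜 := ℝ)).comp
        hφ.tendsto_atTop).const_add W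
    exact ⟨⟨ge_of_tendsto' (hc 0) fun k => (hx' k).1.1,
        le_of_tendsto_of_tendsto' (hc 0) hW fun k => (hx' k).1.2⟩,
      ge_of_tendsto' (hc 1) fun k => (hx' k).2.1, le_of_tendsto' (hc 1) fun k => (hx' k).2.2⟩
  · intro i j hij
    refine Set.eq_empty_of_forall_notMem ?_
    rintro p ⟨hpi, hpj⟩
    obtain ⟨k, hki, hkj⟩ :=
      ((eventually_mem_interior_rmApply_image (fun k => (hP (φ k)).1 i) (horth i) (hlim' i) hpi).and
        (eventually_mem_interior_rmApply_image (fun k => (hP (φ k)).1 j) (horth j) (hlim' j)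
          hpj)).exists
    have : p ∈ (∅ : Set (EuclideanSpace ℝ (Fin 2))) := (hP (φ k)).2.2 hij ▸ ⟨hki, hkj⟩
    exact this

lemma hasSum_reciprocal_sq :
    HasSum (fun i : ℕ => (1 / ((i : ℝ) + 2)) * (1 / ((i : ℝ) + 2))) (Real.pi ^ 2 / 6 - 1) := by
  have h := (hasSum_nat_add_iff' 2).2 hasSum_zeta_two
  simp only [Finset.sum_range_succ, Finset.sum_range_zero] at h
  have hs : Real.pi ^ 2 / 6 - 1 =
      Real.pi ^ 2 / 6 - (0 + 1 / ((0 : ℕ) : ℝ) ^ 2 + 1 / ((1 : ℕ) : ℝ) ^ 2) := by norm_num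
  rw [hs]
  have hf : (fun i : ℕ => (1 / ((i : ℝ) + 2)) * (1 / ((i : ℝ) + 2))) =
      fun i : ℕ => 1 / ((i + 2 : ℕ) : ℝ) ^ 2 := by
    funext i
    push_cast
    field_simp
  rw [hf]
  exact h

/-- **Corollary 2 (second part).** If for every `ε > 0` the squares of side lengths `1/2`,
`1/3`, `1/4`, … can be packed into a rectangle of height `1` and area `π²/6 - 1 + ε`,
then they tile a rectangle of dimensions `1 × (π²/6 - 1)`: there is a packing into that
rectangle whose complement in it has Lebesgue measure zero. -/
theorem reciprocal_squares_tile_unit_height_rectangle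
    (h : ∀ ε : ℝ, 0 < ε →
      PacksInto reciprocalSquares (rect (Real.pi ^ 2 / 6 - 1 + ε) 1)) :
    ∃ (θ : ℕ → Matrix (Fin 2) (Fin 2) ℝ) (ξ : ℕ → EuclideanSpace ℝ (Fin 2)),
      IsPacking reciprocalSquares θ ξ (rect (Real.pi ^ 2 / 6 - 1) 1) ∧
      MeasureTheory.volume
        (rect (Real.pi ^ 2 / 6 - 1) 1 \
          ⋃ i, rmApply (θ i) (ξ i) '' reciprocalSquares i) = 0 := by
  obtain ⟨θ, ξ, hP⟩ : PacksInto reciprocalSquares (rect (Real.pi ^ 2 / 6 - 1) 1) := by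
    refine packsInto_rect_of_forall_pos (fun i => ?_) _ _ h
    have : (0 : ℝ) ≤ 1 / ((i : ℝ) + 2) := by positivity
    exact ⟨⟨le_rfl, this⟩, le_rfl, this⟩
  refine ⟨θ, ξ, hP, ?_⟩
  have hopen : ∀ i, MeasurableSet (interior (rmApply (θ i) (ξ i) '' reciprocalSquares i)) :=
    fun i => isOpen_interior.measurableSet
  have hvol : volume (⋃ i, interior (rmApply (θ i) (ξ i) '' reciprocalSquares i)) =
      volume (rect (Real.pi ^ 2 / 6 - 1) 1) := by
    rw [measure_iUnion (fun i j hij => Set.disjoint_iff_inter_eq_empty.2 (hP.2.2 hij)) hopen,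
      volume_rect, ENNReal.ofReal_one, mul_one, ← hasSum_reciprocal_sq.tsum_eq,
      ENNReal.ofReal_tsum_of_nonneg (fun i => by positivity) hasSum_reciprocal_sq.summable]
    refine tsum_congr fun i => ?_
    rw [volume_interior_rmApply_image (hP.1 i), reciprocalSquares, volume_interior_rect,
      ENNReal.ofReal_mul (by positivity)]
  have hsub : (⋃ i, interior (rmApply (θ i) (ξ i) '' reciprocalSquares i)) ⊆
      rect (Real.pi ^ 2 / 6 - 1) 1 :=
    Set.iUnion_subset fun i => interior_subset.trans (hP.2.1 i)
  refine measure_mono_null (Set.sdiff_subset_sdiff_right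
    (Set.iUnion_mono fun i => interior_subset)) ?_
  rw [measure_sdiff hsub (MeasurableSet.iUnion hopen).nullMeasurableSet
    (measure_ne_top_of_subset hsub (isCompact_rect _ _).measure_ne_top), hvol, tsub_self]
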